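/- arXiv:1502.02771 — 2 statements merged into one kernel-verified Lean document; each statement's English description precedes it below -/
import Mathlib

section
/- The Alexandroff proximity δ_A on X = ℚ (with its usual subspace topology) is not an EF-proximity: there exist subsets A, B ⊆ ℚ with A ≁ B such that for every E ⊆ ℚ, either A δ_A E or (ℚ \ E) δ_A B. -/
/-- The Alexandroff proximity on a topological space:
`A δ_A B` iff the closures meet, or both closures are non-compact. -/
def alexRel {X : Type*} [TopologicalSpace X] (A B : Set X) : Prop :=
  (closure A ∩ closure B).Nonempty ∨
    (¬ IsCompact (closure A) ∧ ¬ IsCompact (closure B))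

/-- `A` is δ_A-strongly far from `B`. -/
def alexStronglyFar {X : Type*} [TopologicalSpace X] (A B : Set X) : Prop :=
  ¬ alexRel A B ∧ ∃ C : Set X, ¬ alexRel A Cᶜ ∧ ¬ alexRel C B

/-! If `x` has no compact neighbourhood, then the space is not compact, so some open neighbourhood
`U` of `x` has non-compact complement; take `A = {x}` and `B = Uᶜ`. Whenever `{x}` is far from `E`,
the set `Eᶜ` is a neighbourhood of `x`, so its closure is non-compact, and `Eᶜ` is near `B`. -/

open Filter Set Topology

section

variable {X : Type*} [TopologicalSpace X] {A B E U : Set X} {x : X}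

theorem exists_isOpen_mem_not_isCompact_compl [NoncompactSpace X] (x : X) :
    ∃ U : Set X, IsOpen U ∧ x ∈ U ∧ ¬ IsCompact Uᶜ := by
  by_contra! h
  have cocompact_le : cocompact X ≤ 𝓝 x := fun V hV ↦ by
    obtain ⟨U, hUV, hU, hxU⟩ := mem_nhds_iff.1 hV
    exact mem_of_superset (mem_cocompact'.2 ⟨Uᶜ, h U hU hxU, subset_rfl⟩) hUV
  -- Adding the limit `x` of the identity along `cocompact X` to its range gives a compact set.
  have compact_insert : IsCompact (insert x (range (id : X → X))) :=
    Tendsto.isCompact_insert_range_of_cocompact cocompact_le continuous_id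
  rw [range_id, insert_eq_of_mem (mem_univ x)] at compact_insert
  exact noncompact_univ X compact_insert

theorem alexRel_iff_of_isCompact_closure_left (hA : IsCompact (closure A)) :
    alexRel A B ↔ (closure A ∩ closure B).Nonempty :=
  or_iff_left fun h ↦ h.1 hA

theorem not_alexRel_singleton_compl [R0Space X] (hU : IsOpen U) (hx : x ∈ U) :
    ¬ alexRel {x} Uᶜ := by
  rw [alexRel_iff_of_isCompact_closure_left isCompact_closure_singleton,
    hU.isClosed_compl.closure_eq]
  rintro ⟨y, hxy, hyU⟩
  exact hyU ((specializes_iff_mem_closure.2 hxy).symm.mem_open hU hx)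

theorem compl_mem_nhds_of_not_alexRel (h : ¬ alexRel A E) (hx : x ∈ A) : Eᶜ ∈ 𝓝 x := by
  have hxE : x ∉ closure E := fun hxE ↦ h (.inl ⟨x, subset_closure hx, hxE⟩)
  rwa [← mem_interior_iff_mem_nhds, interior_compl]

theorem alexRel_or_alexRel_compl (hx : ∀ K ∈ 𝓝 x, ¬ IsCompact K) (hxA : x ∈ A)
    (hB : ¬ IsCompact (closure B)) (E : Set X) : alexRel A E ∨ alexRel Eᶜ B := by
  refine or_iff_not_imp_left.2 fun hAE ↦ .inr ⟨hx _ ?_, hB⟩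
  exact mem_of_superset (compl_mem_nhds_of_not_alexRel hAE hxA) subset_closure

theorem alexRel_rat_not_EF_general [R0Space X] (hX : ¬ WeaklyLocallyCompactSpace X) :
    ∃ A B : Set X, ¬ alexRel A B ∧ ∀ E : Set X, alexRel A E ∨ alexRel Eᶜ B := by
  obtain ⟨x, hx⟩ : ∃ x : X, ∀ K ∈ 𝓝 x, ¬ IsCompact K := by
    by_contra! h
    exact hX ⟨fun x ↦ let ⟨K, hKx, hK⟩ := h x; ⟨K, hK, hKx⟩⟩
  have : NoncompactSpace X := ⟨hx univ univ_mem⟩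
  obtain ⟨U, hU, hxU, hUc⟩ := exists_isOpen_mem_not_isCompact_compl x
  have hB : ¬ IsCompact (closure Uᶜ) := by rwa [hU.isClosed_compl.closure_eq]
  exact ⟨{x}, Uᶜ, not_alexRel_singleton_compl hU hxU,
    alexRel_or_alexRel_compl hx (mem_singleton x) hB⟩

end

theorem not_weaklyLocallyCompactSpace_rat : ¬ WeaklyLocallyCompactSpace ℚ := by
  intro
  obtain ⟨K, hK, hK0⟩ := exists_compact_mem_nhds (0 : ℚ)
  have h0 : (0 : ℚ) ∈ interior K := mem_interior_iff_mem_nhds.2 hK0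
  rwa [Rat.interior_compact_eq_empty hK] at h0

/-- The Alexandroff proximity on `ℚ` is not an EF-proximity. -/
theorem alexRel_rat_not_EF :
    ∃ A B : Set ℚ, ¬ alexRel A B ∧
      ∀ E : Set ℚ, alexRel A E ∨ alexRel Eᶜ B :=
  alexRel_rat_not_EF_general not_weaklyLocallyCompactSpace_rat
end

section
/- Let X be a topological space and δ a compatible basic proximity on X satisfying the EF property. If W ⊆ X is open with compact complement X \ W, then for every closed subset E of X one has E ⊆ W if and only if E ≁ X \ W. Consequently the Fell miss set W⁺ = {E ∈ CL(X) : E ⊆ W} equals the far-miss set W⁺⁺ = {E ∈ CL(X) : E ≁ X\W}. -/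
/-!
By the Efremovič property for a point and a set, each point outside `closure A` has a neighbourhood
far from `A`. Finitely many such neighbourhoods cover a compact set disjoint from `closure A`, and
by the union axiom a finite union of sets far from `A` is far from `A`. Conversely, a point of
`closure A` is near `A`, and so is every set containing it.
-/

/-- A basic proximity on a set (type) `X`: a relation on subsets of `X`
satisfying axioms (P0)–(P3). -/
structure BasicProximity (X : Type*) where
  rel : Set X → Set X → Prop
  symm : ∀ A B : Set X, rel A B → rel B A
  nonempty_of_rel : ∀ A B : Set X, rel A B → A ≠ ∅ ∧ B ≠ ∅
  rel_of_inter : ∀ A B : Set X, A ∩ B ≠ ∅ → rel A B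
  rel_union : ∀ A B C : Set X, rel A (B ∪ C) ↔ rel A B ∨ rel A C

/-- The Efremovič property: whenever `A ≁ B` there is `E` with `A ≁ E` and
`X \ E ≁ B`. -/
def BasicProximity.EF {X : Type*} (δ : BasicProximity X) : Prop :=
  ∀ A B : Set X, ¬ δ.rel A B → ∃ E : Set X, ¬ δ.rel A E ∧ ¬ δ.rel Eᶜ B

/-- `δ` is compatible with the topology of `X`:
`closure A = {x : {x} δ A}` for every `A`. -/
def BasicProximity.Compatible {X : Type*} [TopologicalSpace X]
    (δ : BasicProximity X) : Prop :=
  ∀ A : Set X, closure A = {x : X | δ.rel {x} A}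

namespace BasicProximity

open Topology

variable {X : Type*} (δ : BasicProximity X)

/-- The axiom of an R-proximity (regular proximity): the Efremovič property required only when the
first of the two far sets is a point. -/
def IsRegular : Prop :=
  ∀ (x : X) (A : Set X), ¬ δ.rel {x} A → ∃ D : Set X, ¬ δ.rel {x} D ∧ ¬ δ.rel Dᶜ A

variable {δ} {A B C K : Set X} {x : X}

lemma EF.isRegular (hEF : δ.EF) : δ.IsRegular := fun x A => hEF {x} A

lemma rel_comm : δ.rel A B ↔ δ.rel B A := ⟨δ.symm A B, δ.symm B A⟩

lemma not_rel_empty_right : ¬ δ.rel A ∅ := fun h => (δ.nonempty_of_rel A ∅ h).2 rfl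

lemma rel.mono_right (h : δ.rel A B) (hBC : B ⊆ C) : δ.rel A C := by
  rw [← Set.union_eq_self_of_subset_left hBC]
  exact (δ.rel_union A B C).2 (Or.inl h)

variable [TopologicalSpace X]

lemma Compatible.mem_closure_iff (hδ : δ.Compatible) : x ∈ closure A ↔ δ.rel {x} A := by
  rw [hδ A, Set.mem_ofPred_eq]

lemma Compatible.exists_mem_nhds_not_rel (hδ : δ.Compatible) (hreg : δ.IsRegular)
    (hx : x ∉ closure A) : ∃ t ∈ 𝓝 x, ¬ δ.rel A t := by
  obtain ⟨D, hxD, hDA⟩ := hreg x A (mt hδ.mem_closure_iff.2 hx)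
  have hDc : Dᶜ ∈ 𝓝 x := by
    rwa [← mem_interior_iff_mem_nhds, interior_compl, Set.mem_compl_iff, hδ.mem_closure_iff]
  exact ⟨Dᶜ, hDc, mt rel_comm.1 hDA⟩

lemma Compatible.not_rel_of_disjoint_closure (hδ : δ.Compatible) (hreg : δ.IsRegular)
    (hK : IsCompact K) (hAK : Disjoint (closure A) K) : ¬ δ.rel A K := by
  refine hK.induction_on (p := fun s => ¬ δ.rel A s) not_rel_empty_right
    (fun s t hst ht hs => ht (hs.mono_right hst))
    (fun s t hs ht hst => ((δ.rel_union A s t).1 hst).elim hs ht) fun x hx => ?_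
  obtain ⟨t, ht, hAt⟩ := hδ.exists_mem_nhds_not_rel hreg (hAK.notMem_of_mem_right hx)
  exact ⟨t, mem_nhdsWithin_of_mem_nhds ht, hAt⟩

lemma Compatible.disjoint_closure_of_not_rel (hδ : δ.Compatible) (h : ¬ δ.rel A B) :
    Disjoint (closure A) B := by
  refine Set.disjoint_left.2 fun x hxA hxB => h ?_
  have hAx : δ.rel A {x} := rel_comm.1 (hδ.mem_closure_iff.1 hxA)
  exact hAx.mono_right (Set.singleton_subset_iff.2 hxB)

lemma Compatible.disjoint_closure_iff_not_rel (hδ : δ.Compatible) (hreg : δ.IsRegular)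
    (hK : IsCompact K) : Disjoint (closure A) K ↔ ¬ δ.rel A K :=
  ⟨hδ.not_rel_of_disjoint_closure hreg hK, hδ.disjoint_closure_of_not_rel⟩

end BasicProximity

theorem fell_miss_eq_farMiss_general {X : Type*} [TopologicalSpace X]
    (δ : BasicProximity X) (hδ : δ.Compatible) (hreg : δ.IsRegular)
    (W : Set X) (hWc : IsCompact Wᶜ) :
    (∀ E : Set X, IsClosed E → (E ⊆ W ↔ ¬ δ.rel E Wᶜ)) ∧
    {E : {F : Set X // F.Nonempty ∧ IsClosed F} | E.1 ⊆ W} =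
      {E : {F : Set X // F.Nonempty ∧ IsClosed F} | ¬ δ.rel E.1 Wᶜ} := by
  have subset_iff_far (E : Set X) (hE : IsClosed E) : E ⊆ W ↔ ¬ δ.rel E Wᶜ := by
    rw [← hδ.disjoint_closure_iff_not_rel hreg hWc, hE.closure_eq,
      Set.disjoint_compl_right_iff_subset]
  exact ⟨subset_iff_far, Set.ext fun E => subset_iff_far E.1 E.2.2⟩

/-- For a compatible EF basic proximity and an open `W` with compact
complement, a closed set is contained in `W` iff it is far from `X \ W`;
hence the Fell miss set `W⁺` equals the far-miss set `W⁺⁺` in `CL(X)`. -/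
theorem fell_miss_eq_farMiss {X : Type*} [TopologicalSpace X]
    (δ : BasicProximity X) (hδ : δ.Compatible) (hEF : δ.EF)
    (W : Set X) (hW : IsOpen W) (hWc : IsCompact Wᶜ) :
    (∀ E : Set X, IsClosed E → (E ⊆ W ↔ ¬ δ.rel E Wᶜ)) ∧
    {E : {F : Set X // F.Nonempty ∧ IsClosed F} | E.1 ⊆ W} =
      {E : {F : Set X // F.Nonempty ∧ IsClosed F} | ¬ δ.rel E.1 Wᶜ} :=
  fell_miss_eq_farMiss_general δ hδ hEF.isRegular W hWc
end
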